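/- Let n ≥ 2 and let G be a connected threshold graph on vertex set {1,…,n} with degree sequence λ = (λ_1 ≥ ⋯ ≥ λ_n) and conjugate partition λ'. Then the number of spanning trees of G equals ∏_{r=2}^{n−1} λ'_r. -/

import Mathlib

/-!
The count is obtained from the Laplacian spectrum. For a threshold graph `G` on `n` vertices
(connected or not) with Laplacian `L_G`,

  `det (x + L_G) = x * ∏_{r=1}^{n-1} (x + λ'_r)`   (`IsThreshold.det_lapl`),

by induction on `n`: if the last vertex is isolated, deleting it divides the determinant by `x` and
drops the factor with `λ'_{n-1} = 0`. Otherwise the first vertex is adjacent to all others, so `G` is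
the cone over a threshold graph `H`; then `λ'_1(G) = n`, `λ'_{r+1}(G) = λ'_r(H) + 1`, and a Schur
complement together with a rank-one update gives
`(x + 1) det (x + L_G) = x (x + n) det (x + 1 + L_H)` (`det_lapl_cone`).

A connected threshold graph `G` with `n ≥ 2` is such a cone, and by the matrix-tree theorem, with the
apex as root, its number of spanning trees is `det (1 + L_H) = ∏_{r=1}^{n-2} (1 + λ'_r(H))`, which is
`∏_{r=2}^{n-1} λ'_r(G)`.

The matrix-tree theorem (`matrix_tree`) is proved by encoding a spanning tree as the function sending
each vertex to its parent, expanding the determinant multilinearly in the rows into a sum over all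
functions `g` with `g v` a neighbour of `v`, and noting that the summand of `g` is `1` if every
`g`-orbit ends in the root and `0` otherwise.
-/

open Finset

/-- The set of spanning trees of a simple graph `G`: spanning subgraphs of `G`
(encoded as simple graphs on the same vertex set below `G`) that are trees. -/
def spanningTrees {V : Type*} (G : SimpleGraph V) : Set (SimpleGraph V) :=
  {T | T ≤ G ∧ T.IsTree}

/-! ### Spanning trees as parent functions -/

section ParentFunctions

variable {V : Type*}

/-- `g` encodes a tree rooted at `r`: `g` fixes `r`, moves every other vertex along an edge of `G`
(to its parent), and iterating `g` leads every vertex to `r`. -/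
def IsParentFun (G : SimpleGraph V) (r : V) (g : V → V) : Prop :=
  g r = r ∧ (∀ v, v ≠ r → G.Adj v (g v)) ∧ ∀ v, ∃ k : ℕ, g^[k] v = r

/-- The graph whose edges join each vertex `v ≠ r` to its parent `g v`. -/
def parentGraph (r : V) (g : V → V) : SimpleGraph V :=
  SimpleGraph.fromRel fun v w => v ≠ r ∧ g v = w

lemma parentGraph_adj {G : SimpleGraph V} {r : V} {g : V → V} (hg : IsParentFun G r g) {v w : V} :
    (parentGraph r g).Adj v w ↔ (v ≠ r ∧ g v = w) ∨ (w ≠ r ∧ g w = v) := by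
  rw [parentGraph, SimpleGraph.fromRel_adj]
  refine ⟨fun h => h.2, fun h => ⟨?_, h⟩⟩
  rintro rfl
  rcases h with h | h <;> exact (hg.2.1 v h.1).ne h.2.symm

lemma parentGraph_le {G : SimpleGraph V} {r : V} {g : V → V} (hg : IsParentFun G r g) :
    parentGraph r g ≤ G := by
  intro v w h
  rcases (parentGraph_adj hg).1 h with ⟨hv, rfl⟩ | ⟨hw, rfl⟩
  · exact hg.2.1 _ hv
  · exact (hg.2.1 _ hw).symm

lemma parentGraph_connected {G : SimpleGraph V} {r : V} {g : V → V} (hg : IsParentFun G r g) :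
    (parentGraph r g).Connected := by
  have key : ∀ k : ℕ, ∀ v, g^[k] v = r → (parentGraph r g).Reachable v r := by
    intro k
    induction k with
    | zero => rintro v rfl; exact SimpleGraph.Reachable.refl _
    | succ k ih =>
      intro v hv
      by_cases hvr : v = r
      · rw [hvr]
      · exact ((parentGraph_adj hg).2 (Or.inl ⟨hvr, rfl⟩)).reachable.trans
          (ih (g v) (by simpa using hv))
  have : Nonempty V := ⟨r⟩
  refine ⟨fun v w => ?_⟩
  obtain ⟨k, hk⟩ := hg.2.2 v
  obtain ⟨l, hl⟩ := hg.2.2 w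
  exact (key k v hk).trans (key l w hl).symm

/-- A connected graph on `n` vertices with at most `n - 1` edges is a tree. -/
lemma parentGraph_isTree [Finite V] {G : SimpleGraph V} {r : V} {g : V → V}
    (hg : IsParentFun G r g) : (parentGraph r g).IsTree := by
  classical
  have := Fintype.ofFinite V
  have hc := parentGraph_connected hg
  refine SimpleGraph.isTree_iff_connected_and_card.2
    ⟨hc, le_antisymm ?_ hc.card_vert_le_card_edgeSet_add_one⟩
  have hsub : (parentGraph r g).edgeSet ⊆
      (((univ : Finset V).erase r).image fun v => s(v, g v) : Finset (Sym2 V)) := by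
    intro e
    induction e with
    | _ v w =>
      intro h
      rw [SimpleGraph.mem_edgeSet, parentGraph_adj hg] at h
      simp only [coe_image, Set.mem_image, coe_erase, coe_univ]
      rcases h with ⟨h, rfl⟩ | ⟨h, rfl⟩
      · exact ⟨v, by simpa using h, rfl⟩
      · exact ⟨w, by simpa using h, Sym2.eq_swap⟩
  have h1 := Set.ncard_le_ncard hsub (Finset.finite_toSet _)
  rw [Set.ncard_coe_finset] at h1
  have h2 : #(((univ : Finset V).erase r).image fun v => s(v, g v)) ≤ _ := card_image_le
  rw [card_erase_of_mem (mem_univ _), card_univ] at h2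
  have h3 : 0 < Fintype.card V := Fintype.card_pos_iff.2 ⟨r⟩
  rw [Nat.card_coe_set_eq, Nat.card_eq_fintype_card]
  omega

/-- If `g` and `g'` give the same graph but `g v ≠ g' v`, then the edge `{v, g v}` is traversed
by `g'` in the direction `g v ↦ v`, and `g`, `g'` again disagree at `g v`; so they disagree along the
whole orbit of `v` under `g`, contradicting that the orbit ends in `r`. -/
lemma parentGraph_injOn (G : SimpleGraph V) (r : V) :
    Set.InjOn (parentGraph r) {g | IsParentFun G r g} := by
  intro g hg g' hg' heq
  have hstep : ∀ v, g v ≠ g' v → g (g v) ≠ g' (g v) := by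
    intro v hv
    have hvr : v ≠ r := by rintro rfl; exact hv (hg.1.trans hg'.1.symm)
    have h1 : (parentGraph r g').Adj v (g v) := by
      rw [← heq]; exact (parentGraph_adj hg).2 (Or.inl ⟨hvr, rfl⟩)
    rcases (parentGraph_adj hg').1 h1 with h | ⟨hw, h⟩
    · exact absurd h.2.symm hv
    · rw [h]
      intro h2
      -- a 2-cycle `v → g v → v` never meets `r`
      have h3 : ∀ k : ℕ, g^[k] v = v ∨ g^[k] v = g v := by
        intro k
        induction k with
        | zero => exact Or.inl rfl
        | succ k ih =>
          rw [Function.iterate_succ_apply']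
          rcases ih with ih | ih
          · exact Or.inr (by rw [ih])
          · exact Or.inl (by rw [ih, h2])
      obtain ⟨k, hk⟩ := hg.2.2 v
      rcases h3 k with h4 | h4
      · exact hvr (h4.symm.trans hk)
      · exact hw (h4.symm.trans hk)
  funext v
  by_contra hv
  have hall : ∀ k : ℕ, g (g^[k] v) ≠ g' (g^[k] v) := by
    intro k
    induction k with
    | zero => exact hv
    | succ k ih => rw [Function.iterate_succ_apply']; exact hstep _ ih
  obtain ⟨k, hk⟩ := hg.2.2 v
  exact hall k (by rw [hk, hg.1, hg'.1])

/-- The parent of `v` in a tree `T` is a neighbour of `v` that is closer to `r`; the resulting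
parent graph is a connected subgraph of `T`, hence all of `T`. -/
lemma exists_parentFun {G T : SimpleGraph V} (r : V) (hle : T ≤ G) (hT : T.IsTree) :
    ∃ g, IsParentFun G r g ∧ parentGraph r g = T := by
  classical
  have hex : ∀ v, ∃ w, v ≠ r → T.Adj v w ∧ T.dist w r < T.dist v r := by
    intro v
    by_cases hv : v = r
    · exact ⟨v, fun h => absurd hv h⟩
    obtain ⟨p, hp⟩ := hT.connected.exists_walk_length_eq_dist v r
    cases p with
    | nil => exact absurd rfl hv
    | cons h q =>
      refine ⟨_, fun _ => ⟨h, ?_⟩⟩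
      have := SimpleGraph.dist_le q
      rw [SimpleGraph.Walk.length_cons] at hp
      omega
  choose f hf using hex
  let g : V → V := fun v => if v = r then r else f v
  have hgv : ∀ v, v ≠ r → g v = f v := fun v hv => if_neg hv
  have hgr : g r = r := if_pos rfl
  have hreach : ∀ d v, T.dist v r ≤ d → ∃ k : ℕ, g^[k] v = r := by
    intro d
    induction d with
    | zero =>
      intro v hv
      exact ⟨0, (hT.connected.dist_eq_zero_iff).1 (Nat.le_zero.1 hv)⟩
    | succ d ih =>
      intro v hv
      by_cases hvr : v = r
      · exact ⟨0, hvr⟩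
      · obtain ⟨k, hk⟩ := ih (g v) (by have := (hf v hvr).2; rw [hgv v hvr]; omega)
        exact ⟨k + 1, by simpa using hk⟩
  have hgT : IsParentFun T r g :=
    ⟨hgr, fun v hv => by rw [hgv v hv]; exact (hf v hv).1, fun v => hreach _ v le_rfl⟩
  refine ⟨g, ⟨hgr, fun v hv => hle (hgT.2.1 v hv), hgT.2.2⟩, ?_⟩
  exact le_antisymm (parentGraph_le hgT)
    ((SimpleGraph.isTree_iff_minimal_connected.1 hT).2 (parentGraph_connected hgT)
      (parentGraph_le hgT))

lemma ncard_spanningTrees [Finite V] (G : SimpleGraph V) (r : V) :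
    (spanningTrees G).ncard = {g | IsParentFun G r g}.ncard := by
  rw [← (parentGraph_injOn G r).ncard_image]
  congr 1
  ext T
  constructor
  · rintro ⟨hle, hT⟩
    exact exists_parentFun r hle hT
  · rintro ⟨g, hg, rfl⟩
    exact ⟨parentGraph_le hg, parentGraph_isTree hg⟩

end ParentFunctions

/-! ### The matrix-tree theorem -/

section MatrixTree

variable {V : Type*} [Fintype V] [DecidableEq V]

/-- The Laplacian of `G` over `ℚ` (degrees on the diagonal, `-1` at adjacent pairs). -/
noncomputable def lapl (G : SimpleGraph V) : Matrix V V ℚ :=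
  open Classical in
  Matrix.of fun v w =>
    (if v = w then ∑ u, (if G.Adj v u then 1 else 0 : ℚ) else 0) - (if G.Adj v w then 1 else 0)

/-- The matrix with row `e_v - e_{g v}` at `v ≠ r` and row `e_r` at `r`. -/
def parentMatrix (r : V) (g : V → V) : Matrix V V ℚ :=
  Matrix.of fun v => if v = r then Pi.single r 1 else Pi.single v 1 - Pi.single (g v) 1

/-- Ordering the vertices by depth makes the matrix unitriangular. -/
lemma det_parentMatrix_of_reach {r : V} {g : V → V}
    (hreach : ∀ v, ∃ k : ℕ, g^[k] v = r) : (parentMatrix r g).det = 1 := by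
  let d : V → ℕ := fun v => Nat.find (hreach v)
  have hd : ∀ v, v ≠ r → d (g v) < d v := by
    intro v hv
    have hs : g^[d v] v = r := Nat.find_spec (hreach v)
    obtain ⟨k, hk⟩ : ∃ k, d v = k + 1 := by
      refine Nat.exists_eq_succ_of_ne_zero fun h0 => hv ?_
      rw [h0] at hs
      exact hs
    rw [hk] at hs ⊢
    exact Nat.lt_succ_of_le (Nat.find_min' (hreach (g v)) hs)
  have hentry : ∀ v w, d v ≤ d w → parentMatrix r g v w = if v = w then 1 else 0 := by
    intro v w hvw
    by_cases hv : v = r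
    · subst hv
      simp [parentMatrix, Pi.single_apply, eq_comm]
    · have hne : w ≠ g v := by
        rintro rfl
        exact absurd (hd v hv) (by omega)
      simp [parentMatrix, hv, Pi.single_apply, hne, eq_comm (a := w)]
  have htri : (parentMatrix r g).BlockTriangular (fun v => OrderDual.toDual (d v)) := by
    intro v w hvw
    have hlt : d v < d w := hvw
    rw [hentry v w hlt.le, if_neg]
    rintro rfl
    exact lt_irrefl _ hlt
  rw [htri.det]
  refine Finset.prod_eq_one fun k _ => ?_
  have hblock : (parentMatrix r g).toSquareBlock (fun v => OrderDual.toDual (d v)) k = 1 := by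
    ext ⟨v, hv⟩ ⟨w, hw⟩
    have : d v = d w := OrderDual.toDual.injective (hv.trans hw.symm)
    simp [Matrix.toSquareBlock_def, hentry v w this.le, Matrix.one_apply]
  rw [hblock, Matrix.det_one]

/-- The indicator of the vertices that never reach `r` is in the kernel. -/
lemma det_parentMatrix_of_not_reach {r : V} {g : V → V}
    (hnot : ¬ ∀ v, ∃ k : ℕ, g^[k] v = r) : (parentMatrix r g).det = 0 := by
  classical
  push Not at hnot
  obtain ⟨v₀, hv₀⟩ := hnot
  rw [← Matrix.exists_mulVec_eq_zero_iff]
  refine ⟨fun v => if ∀ k : ℕ, g^[k] v ≠ r then 1 else 0, ?_, ?_⟩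
  · intro h
    have := congrFun h v₀
    simp [hv₀] at this
  · funext v
    by_cases hv : v = r
    · subst hv
      have : ¬ ∀ k : ℕ, g^[k] v ≠ v := fun h => h 0 rfl
      simp only [parentMatrix, Matrix.mulVec, Matrix.of_apply, if_true, single_dotProduct, one_mul,
        if_neg this, Pi.zero_apply]
    · have hiff : (∀ k : ℕ, g^[k] v ≠ r) ↔ ∀ k : ℕ, g^[k] (g v) ≠ r := by
        refine ⟨fun h k => h (k + 1), fun h k => ?_⟩
        cases k with
        | zero => exact hv
        | succ k => exact h k
      simp only [parentMatrix, Matrix.mulVec, Matrix.of_apply, if_neg hv, sub_dotProduct,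
        single_dotProduct, one_mul, hiff, sub_self, Pi.zero_apply]

/-- Matrix-tree theorem: the determinant of the Laplacian with the row of `r` replaced by `e_r`
counts spanning trees. The row of `v ≠ r` is the sum of `e_v - e_w` over the neighbours `w` of `v`, so
by multilinearity the determinant is a sum over functions `g` of the determinants of
`parentMatrix r g`, which detect whether `g` is acyclic. -/
lemma matrix_tree (G : SimpleGraph V) (r : V) :
    ((spanningTrees G).ncard : ℚ) =
      (Matrix.of fun v => if v = r then Pi.single r 1 else lapl G v).det := by
  classical
  let A : V → Finset V := fun v => if v = r then {r} else univ.filter (G.Adj v)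
  let row : V → V → V → ℚ := fun v p =>
    if v = r then Pi.single r 1 else Pi.single v 1 - Pi.single p 1
  have hrow : (Matrix.of fun v => if v = r then Pi.single r 1 else lapl G v) =
      fun v => ∑ p ∈ A v, row v p := by
    funext v w
    by_cases hv : v = r
    · simp [A, row, hv]
    · simp only [Matrix.of_apply, hv, if_false, A, row, lapl, Finset.sum_apply, Pi.sub_apply,
        Finset.sum_sub_distrib, Pi.single_apply, Finset.sum_filter]
      congr 1
      · by_cases hvw : v = w
        · simp [hvw]
        · simp [hvw, Ne.symm hvw]
      · rw [Finset.sum_eq_single w] <;> simp +contextual [eq_comm]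
  have hexp := (Matrix.detRowAlternating (n := V) (R := ℚ)).toMultilinearMap.map_sum_finset row A
  have hdet : (Matrix.of fun v => if v = r then Pi.single r 1 else lapl G v).det =
      ∑ g ∈ Fintype.piFinset A, (parentMatrix r g).det := by
    rw [hrow]
    exact hexp
  rw [hdet, ncard_spanningTrees G r]
  have hset : {g | IsParentFun G r g} =
      ((Fintype.piFinset A).filter fun g => ∀ v, ∃ k : ℕ, g^[k] v = r : Finset (V → V)) := by
    ext g
    simp only [Set.mem_ofPred_eq, coe_filter, Fintype.mem_piFinset, IsParentFun, A]
    constructor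
    · rintro ⟨h1, h2, h3⟩
      refine ⟨fun v => ?_, h3⟩
      by_cases hv : v = r
      · simp [hv, h1]
      · simp [hv, h2 v hv]
    · rintro ⟨h1, h3⟩
      refine ⟨by simpa using h1 r, fun v hv => by simpa [hv] using h1 v, h3⟩
  rw [hset, Set.ncard_coe_finset, Finset.card_filter, Nat.cast_sum]
  refine Finset.sum_congr rfl fun g _ => ?_
  by_cases hg : ∀ v, ∃ k : ℕ, g^[k] v = r
  · rw [if_pos hg, det_parentMatrix_of_reach hg, Nat.cast_one]
  · rw [if_neg hg, det_parentMatrix_of_not_reach hg, Nat.cast_zero]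

end MatrixTree

/-! ### The Laplacian determinant under adding a vertex -/

section AddVertex

open scoped Matrix

variable {V W : Type*} [Fintype V] [DecidableEq V] [Fintype W] [DecidableEq W]

open Classical in
lemma lapl_inl (G : SimpleGraph V) (e : W ⊕ Unit ≃ V) (i j : W) :
    lapl G (e (.inl i)) (e (.inl j)) = lapl (G.comap fun i => e (.inl i)) i j +
      if i = j then (if G.Adj (e (.inl i)) (e (.inr ())) then 1 else 0) else 0 := by
  simp only [lapl, Matrix.of_apply, SimpleGraph.comap_adj, ← e.sum_comp, Fintype.sum_sum_type,
    e.injective.eq_iff, Sum.inl.injEq, Finset.univ_unique, Finset.sum_singleton,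
    PUnit.default_eq_unit]
  split_ifs <;> ring

lemma lapl_mulVec_one (G : SimpleGraph V) : lapl G *ᵥ 1 = 0 := by
  funext v
  simp [lapl, Matrix.mulVec, dotProduct, Finset.sum_sub_distrib]

/-- A rank-one update in the direction of an eigenvector. -/
lemma det_add_smul_ones {A : Matrix W W ℚ} {y : ℚ} (hy : y ≠ 0) (hA : A *ᵥ 1 = y • 1) (c : ℚ) :
    (A + c • Matrix.of fun _ _ => 1).det = A.det * (1 + c * Fintype.card W / y) := by
  have hJ : A + c • (Matrix.of fun _ _ => (1 : ℚ)) =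
      A * (1 + Matrix.replicateCol Unit (fun _ : W => c / y) *
        Matrix.replicateRow Unit (1 : W → ℚ)) := by
    ext v w
    have hv : ∑ u, A v u = y := by
      simpa [Matrix.mulVec, dotProduct] using congrFun hA v
    rw [mul_add, mul_one, Matrix.add_apply, Matrix.add_apply]
    congr 1
    simp only [Matrix.mul_apply, Matrix.smul_apply, Matrix.of_apply, Matrix.replicateCol_apply,
      Matrix.replicateRow_apply, Pi.one_apply, Finset.univ_unique, Finset.sum_singleton,
      ← Finset.sum_mul, hv, smul_eq_mul, mul_one]
    field_simp
  rw [hJ, Matrix.det_mul, Matrix.det_one_add_replicateCol_mul_replicateRow]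
  simp [dotProduct]
  ring_nf
  simp

lemma det_lapl_isolated (G : SimpleGraph V) (e : W ⊕ Unit ≃ V)
    (hiso : ∀ v, ¬ G.Adj v (e (.inr ()))) (x : ℚ) :
    (x • (1 : Matrix V V ℚ) + lapl G).det =
      x * (x • (1 : Matrix W W ℚ) + lapl (G.comap fun i => e (.inl i))).det := by
  classical
  have hiso' : ∀ v, ¬ G.Adj (e (.inr ())) v := fun v h => hiso v h.symm
  rw [← Matrix.det_submatrix_equiv_self e]
  have hb : (x • (1 : Matrix V V ℚ) + lapl G).submatrix e e =
      Matrix.fromBlocks (x • (1 : Matrix W W ℚ) + lapl (G.comap fun i => e (.inl i))) 0 0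
        (Matrix.of fun _ _ => x) := by
    ext (i | i) (j | j)
    · simp [lapl_inl, hiso, Matrix.one_apply]
    · simp [lapl, hiso]
    · simp [lapl, hiso']
    · simp [lapl, hiso']
  rw [hb, Matrix.det_fromBlocks_zero₂₁, Matrix.det_unique (Matrix.of fun _ _ => x), mul_comm]
  rfl

/-- A Schur complement at the new vertex turns the determinant into that of
`(x + 1) + L_H - J / (x + m)`, where `J` is the all-ones matrix and `m` the number of old vertices. -/
lemma det_lapl_cone (G : SimpleGraph V) (e : W ⊕ Unit ≃ V)
    (hdom : ∀ i, G.Adj (e (.inl i)) (e (.inr ()))) {x : ℚ} (hx : 0 < x) :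
    (x + 1) * (x • (1 : Matrix V V ℚ) + lapl G).det =
      x * (x + 1 + Fintype.card W) *
        ((x + 1) • (1 : Matrix W W ℚ) + lapl (G.comap fun i => e (.inl i))).det := by
  classical
  set H := G.comap fun i => e (.inl i) with hH
  have hxm : x + Fintype.card W ≠ 0 := by positivity
  have hb : (x • (1 : Matrix V V ℚ) + lapl G).submatrix e e =
      Matrix.fromBlocks ((x + 1) • (1 : Matrix W W ℚ) + lapl H) (Matrix.of fun _ _ => -1)
        (Matrix.of fun _ _ => -1) ((x + Fintype.card W) • (1 : Matrix Unit Unit ℚ)) := by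
    ext (i | i) (j | j)
    · simp only [Matrix.submatrix_apply, Matrix.add_apply, lapl_inl, hdom, Matrix.smul_apply,
        Matrix.one_apply, e.injective.eq_iff, Sum.inl.injEq, Matrix.fromBlocks_apply₁₁, ← hH]
      split_ifs <;> simp <;> ring
    · simp [lapl, hdom]
    · simp [lapl, (hdom _).symm]
    · simp only [Matrix.submatrix_apply, Matrix.add_apply, lapl, Matrix.of_apply, ← e.sum_comp,
        Fintype.sum_sum_type]
      simp [(hdom _).symm]
  have hinv : ((x + Fintype.card W) • (1 : Matrix Unit Unit ℚ)) *
      ((x + Fintype.card W)⁻¹ • (1 : Matrix Unit Unit ℚ)) = 1 := by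
    simp [smul_smul, hxm]
  let _ : Invertible ((x + Fintype.card W) • (1 : Matrix Unit Unit ℚ)) :=
    ⟨(x + Fintype.card W)⁻¹ • 1, mul_eq_one_comm.1 hinv, hinv⟩
  have hinvOf : ⅟((x + Fintype.card W) • (1 : Matrix Unit Unit ℚ)) =
      (x + Fintype.card W)⁻¹ • (1 : Matrix Unit Unit ℚ) := rfl
  rw [← Matrix.det_submatrix_equiv_self e, hb, Matrix.det_fromBlocks₂₂, hinvOf]
  have hJ : (x + 1) • (1 : Matrix W W ℚ) + lapl H - (Matrix.of fun (_ : W) (_ : Unit) => (-1 : ℚ)) *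
      ((x + Fintype.card W)⁻¹ • (1 : Matrix Unit Unit ℚ)) *
        (Matrix.of fun (_ : Unit) (_ : W) => (-1 : ℚ)) =
      (x + 1) • (1 : Matrix W W ℚ) + lapl H +
        (-(x + Fintype.card W)⁻¹) • Matrix.of fun _ _ => 1 := by
    ext i j
    simp [Matrix.mul_apply]
    ring
  have hrow : ((x + 1) • (1 : Matrix W W ℚ) + lapl H) *ᵥ 1 = (x + 1) • 1 := by
    rw [Matrix.add_mulVec, lapl_mulVec_one, Matrix.smul_mulVec, Matrix.one_mulVec, add_zero]
  have hx1 : x + 1 ≠ 0 := by positivity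
  rw [hJ, det_add_smul_ones hx1 hrow, Matrix.det_smul, Matrix.det_one]
  simp only [Fintype.card_unit, pow_one, mul_one]
  field_simp
  ring

/-- Spanning trees of a cone over `H` are counted by `det (1 + L_H)`. -/
lemma ncard_spanningTrees_cone (G : SimpleGraph V) (e : W ⊕ Unit ≃ V)
    (hdom : ∀ i, G.Adj (e (.inl i)) (e (.inr ()))) :
    ((spanningTrees G).ncard : ℚ) =
      ((1 : ℚ) • (1 : Matrix W W ℚ) + lapl (G.comap fun i => e (.inl i))).det := by
  classical
  rw [matrix_tree G (e (.inr ())), ← Matrix.det_submatrix_equiv_self e]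
  have hb : (Matrix.of fun v => if v = e (.inr ()) then Pi.single (e (.inr ())) 1
        else lapl G v).submatrix e e =
      Matrix.fromBlocks ((1 : ℚ) • (1 : Matrix W W ℚ) + lapl (G.comap fun i => e (.inl i)))
        (Matrix.of fun _ _ => -1) 0 (1 : Matrix Unit Unit ℚ) := by
    ext (i | i) (j | j)
    · simp only [Matrix.submatrix_apply, Matrix.of_apply, e.injective.eq_iff, reduceCtorEq, if_false,
        lapl_inl, hdom, if_true, Matrix.fromBlocks_apply₁₁, Matrix.add_apply, Matrix.smul_apply,
        Matrix.one_apply, smul_eq_mul, one_mul]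
      ring
    · simp [lapl, hdom]
    · simp
    · simp
  rw [hb, Matrix.det_fromBlocks_zero₂₁, Matrix.det_one, mul_one]

end AddVertex

/-! ### Threshold graphs -/

section Threshold

/-- `lam` describes the threshold graph `G` on `Fin n`: it is weakly decreasing, bounded by `n - 1`,
and the neighbours of `i` are the `lam i` smallest vertices other than `i`. -/
structure IsThreshold {n : ℕ} (G : SimpleGraph (Fin n)) (lam : Fin n → ℕ) : Prop where
  anti : ∀ i j : Fin n, i ≤ j → lam j ≤ lam i
  lt : ∀ i, lam i < n
  adj : ∀ i j : Fin n, G.Adj i j ↔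
    j ≠ i ∧ (if (j : ℕ) < (i : ℕ) then (j : ℕ) + 1 else (j : ℕ)) ≤ lam i

/-- The conjugate partition `r ↦ #{i | r ≤ lam i}`. -/
def conjugate {n : ℕ} (lam : Fin n → ℕ) (r : ℕ) : ℕ :=
  #{i | r ≤ lam i}

/-- Splitting off the first vertex of `Fin (m + 1)`. -/
def splitFirst (m : ℕ) : Fin m ⊕ Unit ≃ Fin (m + 1) :=
  (Equiv.optionEquivSumPUnit (Fin m)).symm.trans (finSuccEquiv m).symm

/-- Splitting off the last vertex of `Fin (m + 1)`. -/
def splitLast (m : ℕ) : Fin m ⊕ Unit ≃ Fin (m + 1) :=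
  (Equiv.optionEquivSumPUnit (Fin m)).symm.trans finSuccEquivLast.symm

@[simp] lemma splitFirst_inl (m : ℕ) (i : Fin m) : splitFirst m (.inl i) = i.succ := by
  simp [splitFirst]

@[simp] lemma splitFirst_inr (m : ℕ) : splitFirst m (.inr ()) = 0 := by
  simp [splitFirst]

@[simp] lemma splitLast_inl (m : ℕ) (i : Fin m) : splitLast m (.inl i) = i.castSucc := by
  simp [splitLast]

@[simp] lemma splitLast_inr (m : ℕ) : splitLast m (.inr ()) = Fin.last m := by
  simp [splitLast]

variable {m : ℕ} {G : SimpleGraph (Fin (m + 2))} {lam : Fin (m + 2) → ℕ}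

lemma IsThreshold.not_adj_last (h : IsThreshold G lam) (h0 : lam (Fin.last _) = 0)
    (v : Fin (m + 2)) : ¬ G.Adj v (Fin.last _) := by
  intro hv
  have := (h.adj _ _).1 hv.symm
  have hne := this.1
  have hlt : (v : ℕ) < (Fin.last (m + 1) : ℕ) := Fin.val_lt_last hne
  rw [if_pos hlt] at this
  omega

lemma IsThreshold.castSucc (h : IsThreshold G lam) (h0 : lam (Fin.last _) = 0) :
    IsThreshold (G.comap fun i => splitLast (m + 1) (.inl i)) (fun i => lam i.castSucc) where
  anti i j hij := h.anti _ _ (by simpa using hij)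
  lt i := by
    have h1 := h.not_adj_last h0 i.castSucc
    rw [h.adj] at h1
    have h2 := i.isLt
    have h3 : Fin.last (m + 1) ≠ i.castSucc := (Fin.castSucc_ne_last i).symm
    rw [if_neg (by simp)] at h1
    simp only [ne_eq, h3, not_false_eq_true, true_and, Fin.val_last, not_le] at h1
    exact h1
  adj i j := by
    simp [h.adj]

lemma IsThreshold.adj_zero (h : IsThreshold G lam) (h0 : lam (Fin.last _) ≠ 0)
    (i : Fin (m + 1)) : G.Adj i.succ 0 := by
  have := h.anti i.succ (Fin.last _) (Fin.le_last _)
  rw [h.adj]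
  refine ⟨(Fin.succ_ne_zero i).symm, ?_⟩
  rw [if_pos (by simp)]
  simp
  omega

lemma IsThreshold.lam_zero (h : IsThreshold G lam) (h0 : lam (Fin.last _) ≠ 0) :
    lam 0 = m + 1 := by
  have h1 := ((h.adj _ _).1 (h.adj_zero h0 (Fin.last m)).symm).2
  have h2 := h.lt 0
  simp at h1
  omega

lemma IsThreshold.succ (h : IsThreshold G lam) (h0 : lam (Fin.last _) ≠ 0) :
    IsThreshold (G.comap fun i => splitFirst (m + 1) (.inl i)) (fun i => lam i.succ - 1) where
  anti i j hij := Nat.sub_le_sub_right (h.anti _ _ (by simpa using hij)) 1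
  lt i := by
    have := h.lt i.succ
    omega
  adj i j := by
    have : 1 ≤ lam i.succ :=
      (Nat.one_le_iff_ne_zero.2 h0).trans (h.anti i.succ (Fin.last _) (Fin.le_last _))
    simp only [SimpleGraph.comap_adj, splitFirst_inl, h.adj, ne_eq, Fin.succ_inj, Fin.val_succ]
    refine and_congr_right fun _ => ?_
    split_ifs <;> omega

lemma conjugate_castSucc (h0 : lam (Fin.last _) = 0) (r : ℕ) :
    conjugate lam (r + 1) = conjugate (fun i => lam i.castSucc) (r + 1) := by
  simp only [conjugate, Finset.card_filter]
  rw [Fin.sum_univ_castSucc]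
  simp [h0]

lemma IsThreshold.conjugate_top (h : IsThreshold G lam) (h0 : lam (Fin.last _) = 0) :
    conjugate lam (m + 1) = 0 := by
  rw [conjugate, Finset.card_eq_zero, Finset.filter_eq_empty_iff]
  intro i _
  refine Fin.lastCases ?_ (fun i => ?_) i
  · omega
  · have := (h.castSucc h0).lt i
    omega

lemma IsThreshold.conjugate_succ (h : IsThreshold G lam) (h0 : lam (Fin.last _) ≠ 0) {r : ℕ}
    (hr : r ≤ m) : conjugate lam (r + 1) = conjugate (fun i => lam i.succ - 1) r + 1 := by
  simp only [conjugate, Finset.card_filter]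
  rw [Fin.sum_univ_succ, h.lam_zero h0, if_pos (by omega), add_comm]
  congr 1
  refine Finset.sum_congr rfl fun i _ => ?_
  have := h.anti i.succ (Fin.last _) (Fin.le_last _)
  exact if_congr (by omega) rfl rfl

lemma conjugate_zero {n : ℕ} (lam : Fin n → ℕ) : conjugate lam 0 = n := by
  simp [conjugate]

/-- The nonzero Laplacian eigenvalues of a threshold graph are the parts `λ'₁, …, λ'_{n-1}` of the
conjugate degree sequence; here `n = m + 1`. -/
lemma IsThreshold.det_lapl : ∀ {m : ℕ} {G : SimpleGraph (Fin (m + 1))} {lam : Fin (m + 1) → ℕ},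
    IsThreshold G lam → ∀ {x : ℚ}, 0 < x →
    (x • (1 : Matrix (Fin (m + 1)) (Fin (m + 1)) ℚ) + lapl G).det =
      x * ∏ r ∈ Finset.range m, (x + conjugate lam (r + 1)) := by
  intro m
  induction m with
  | zero =>
    intro G lam _ x _
    simp [lapl]
  | succ m ih =>
    intro G lam h x hx
    by_cases h0 : lam (Fin.last _) = 0
    · -- the last vertex is isolated
      rw [det_lapl_isolated G (splitLast (m + 1)) (by simpa using h.not_adj_last h0),
        ih (h.castSucc h0) hx, Finset.prod_range_succ, h.conjugate_top h0]
      simp only [conjugate_castSucc h0, Nat.cast_zero, add_zero]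
      ring
    · -- the first vertex is adjacent to all others
      have hcone := det_lapl_cone G (splitFirst (m + 1)) (by simpa using h.adj_zero h0) hx
      rw [ih (h.succ h0) (by positivity : (0 : ℚ) < x + 1), Fintype.card_fin] at hcone
      have hx1 : x + 1 ≠ 0 := by positivity
      refine mul_left_cancel₀ hx1 (hcone.trans ?_)
      rw [Finset.prod_range_succ', h.conjugate_succ h0 (Nat.zero_le _), conjugate_zero]
      have hprod : ∏ r ∈ Finset.range m, (x + conjugate lam (r + 1 + 1)) =
          ∏ r ∈ Finset.range m, (x + 1 + conjugate (fun i => lam i.succ - 1) (r + 1)) := by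
        refine Finset.prod_congr rfl fun r hr => ?_
        rw [h.conjugate_succ h0 (Finset.mem_range.1 hr)]
        push_cast
        ring
      rw [hprod]
      push_cast
      ring

lemma IsThreshold.lam_last_ne_zero (h : IsThreshold G lam) (hconn : G.Connected) :
    lam (Fin.last _) ≠ 0 := by
  intro h0
  obtain ⟨w, hw⟩ := hconn.preconnected.exists_adj_of_nontrivial (Fin.last (m + 1))
  exact h.not_adj_last h0 w hw.symm

end Threshold

/-- Merris' theorem: the number of spanning trees of a connected threshold graph is
`∏_{r=2}^{n-1} λ'_r`.  Vertices are `Fin n`, thought of as `{1,…,n}` via `i ↦ i + 1`;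
`lam` is the (weakly decreasing) degree sequence and `conj` its conjugate partition. -/
theorem merris (n : ℕ) (hn : 2 ≤ n)
    (G : SimpleGraph (Fin n)) (hconn : G.Connected)
    (lam : Fin n → ℕ)
    (hdeg : ∀ i, lam i = Nat.card (G.neighborSet i))
    (hanti : ∀ i j : Fin n, i ≤ j → lam j ≤ lam i)
    (hthr : ∀ i j : Fin n, G.Adj i j ↔
      j ≠ i ∧ (if (j : ℕ) < (i : ℕ) then (j : ℕ) + 1 else (j : ℕ)) ≤ lam i)
    (conj : ℕ → ℕ)
    (hconj : ∀ r, conj r = ((univ : Finset (Fin n)).filter fun i => r ≤ lam i).card) :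
    (spanningTrees G).ncard = ∏ r ∈ Finset.Icc 2 (n - 1), conj r := by
  obtain ⟨m, rfl⟩ : ∃ m, n = m + 2 := ⟨n - 2, by omega⟩
  have h : IsThreshold G lam := by
    refine ⟨hanti, fun i => ?_, hthr⟩
    classical
    rw [hdeg, Nat.card_eq_fintype_card, SimpleGraph.card_neighborSet_eq_degree]
    simpa using G.degree_lt_card_verts i
  have h0 := h.lam_last_ne_zero hconn
  obtain rfl : conj = conjugate lam := funext hconj
  have hQ : ((spanningTrees G).ncard : ℚ) =
      ∏ r ∈ Finset.range m, (conjugate lam (r + 1 + 1) : ℚ) := by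
    rw [ncard_spanningTrees_cone G (splitFirst (m + 1)) (by simpa using h.adj_zero h0),
      (h.succ h0).det_lapl one_pos, one_mul]
    refine Finset.prod_congr rfl fun r hr => ?_
    rw [h.conjugate_succ h0 (Finset.mem_range.1 hr)]
    push_cast
    ring
  have hIcc : ∏ r ∈ Finset.Icc 2 (m + 2 - 1), conjugate lam r =
      ∏ r ∈ Finset.range m, conjugate lam (r + 1 + 1) := by
    rw [Finset.range_eq_Ico, Finset.prod_Ico_add' (fun r => conjugate lam (r + 1)) 0 m 1,
      Finset.prod_Ico_add' (fun r => conjugate lam r) (0 + 1) (m + 1) 1]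
    rfl
  rw [hIcc]
  exact_mod_cast hQ
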